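/- arXiv:2410.07399 — 3 statements merged into one kernel-verified Lean document; each statement's English description precedes it below -/
import Mathlib

section
/- Fix an integer l ≥ 1. Call a partition an l-core if no box of its Young diagram has hook length divisible by l. Then the map sending a partition λ to the vector (c̄_j(λ) − c̄_{j+1}(λ))_{j ∈ ℤ/lℤ} restricts to a bijection from the set of l-core partitions onto the set of vectors v : ℤ/lℤ → ℤ with Σ_{j ∈ ℤ/lℤ} v_j = 0 (the type A_{l−1} root lattice). -/
/-- The number of boxes of the Young diagram `μ` whose content (row index minus
column index, in 1-indexed terms `a − b`, equivalently `i − j` in Mathlib's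
0-indexed terms) is congruent to `j` modulo `l`. -/
def contentCountMod (l : ℕ) (μ : YoungDiagram) (j : ZMod l) : ℕ :=
  (μ.cells.filter (fun c => (((c.1 : ℤ) - (c.2 : ℤ) : ℤ) : ZMod l) = j)).card

/-- The hook length of a box `c = (i, j)` of `μ`: arm plus leg plus one. -/
def hookLength (μ : YoungDiagram) (c : ℕ × ℕ) : ℕ :=
  (μ.rowLen c.1 - c.2) + (μ.colLen c.2 - c.1) - 1

/-- A Young diagram is an `l`-core if no box has hook length divisible by `l`. -/
def IsCore (l : ℕ) (μ : YoungDiagram) : Prop :=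
  ∀ c ∈ μ.cells, ¬ l ∣ hookLength μ c

/-!
Record a partition `μ` by its bead set `B = {i - μᵢ : i ∈ ℕ} ⊆ ℤ`, the vertical steps of its
boundary path. The complement of `B` consists of the horizontal steps, and the hook lengths of `μ`
are the differences `y - x > 0` with `x ∈ B` and `y ∉ B`. Hence `μ` is an `l`-core iff `B` is closed
under adding `l`, i.e. iff `B = {x | v (x mod l) ≤ ⌊x / l⌋}` for some `v : ℤ/lℤ → ℤ`.

Contents decrease by one along a row, so `c̄ⱼ - c̄ⱼ₊₁` telescopes row by row: it compares the
numbers of elements congruent to `j` in `{i : i < N}` and in `{i - μᵢ : i < N}`, and for a core this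
comparison returns `v j`. The core is therefore recovered from the vector. Conversely, the set
defined by `v` is the bead set of a partition as soon as it has exactly `N` elements below `N` for
arbitrarily large `N`, and it has `l * M - ∑ j, v j` elements below `l * M` for large `M`.
-/

open Finset Filter

section Enumeration

theorem exists_strictMono_range_eq {α : Type*} [LinearOrder α] [LocallyFiniteOrder α] {s : Set α}
    (hbelow : BddBelow s) (habove : ¬ BddAbove s) :
    ∃ f : ℕ → α, StrictMono f ∧ Set.range f = s := by
  classical
  have : Nonempty α := hbelow.nonempty
  have : Nonempty s := (nonempty_of_not_bddAbove habove).to_subtype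
  have : NoMaxOrder s := ⟨fun x => by
    obtain ⟨y, hy, hxy⟩ := not_bddAbove_iff.1 habove x
    exact ⟨⟨y, hy⟩, hxy⟩⟩
  have : WellFoundedLT s := ⟨hbelow.wellFoundedOn_lt⟩
  let := WellFoundedLT.toOrderBot s
  let := LinearLocallyFiniteOrder.succOrder s
  let := LinearLocallyFiniteOrder.predOrder s
  let e : ℕ ≃o s := orderIsoNatOfLinearSuccPredArch.symm
  exact ⟨fun n => e n, fun a b hab => e.strictMono hab, by
    rw [← Function.comp_def, Set.range_comp, e.range_eq, Set.image_univ, Subtype.range_coe]⟩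

theorem monotone_sub_natCast_of_strictMono {f : ℕ → ℤ} (hf : StrictMono f) :
    Monotone fun n => f n - n :=
  monotone_nat_of_le_succ fun n => by
    have := hf (lt_add_one n)
    push_cast
    omega

end Enumeration

section Beads

variable {μ ν : YoungDiagram}

/-- The position of the step of the boundary path of `μ` that ends row `i`. It is the negative of
the usual beta number `λᵢ - i`, since contents are `i - j` in `contentCountMod`. -/
def bead (μ : YoungDiagram) (i : ℕ) : ℤ := i - μ.rowLen i

/-- The position of the step of the boundary path of `μ` that ends column `j`. -/
def gap (μ : YoungDiagram) (j : ℕ) : ℤ := μ.colLen j - 1 - j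

theorem strictMono_bead (μ : YoungDiagram) : StrictMono (bead μ) := fun a b hab => by
  have := μ.rowLen_anti a b hab.le
  unfold bead
  omega

theorem bead_eq_self {i : ℕ} (hi : μ.colLen 0 ≤ i) : bead μ i = i := by
  have h : (i, 0) ∉ μ := by rwa [YoungDiagram.mem_iff_lt_colLen, not_lt]
  rw [YoungDiagram.mem_iff_lt_rowLen] at h
  unfold bead
  omega

theorem bead_injective : Function.Injective bead := fun μ ν h => by
  ext ⟨i, j⟩
  have hrow : μ.rowLen i = ν.rowLen i := by simpa [bead] using congrFun h i
  simp only [YoungDiagram.mem_cells, YoungDiagram.mem_iff_lt_rowLen, hrow]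

theorem eq_of_range_bead_eq (h : Set.range (bead μ) = Set.range (bead ν)) : μ = ν :=
  bead_injective (((strictMono_bead μ).range_inj (strictMono_bead ν)).1 h)

theorem lt_rowLen_iff_lt_colLen {i j : ℕ} : j < μ.rowLen i ↔ i < μ.colLen j := by
  rw [← YoungDiagram.mem_iff_lt_rowLen, YoungDiagram.mem_iff_lt_colLen]

theorem mem_iff_bead_lt_gap {i j : ℕ} : (i, j) ∈ μ ↔ bead μ i < gap μ j := by
  have hcol := lt_rowLen_iff_lt_colLen (μ := μ) (i := i) (j := j)
  rw [YoungDiagram.mem_iff_lt_rowLen]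
  unfold bead gap
  omega

theorem bead_ne_gap (i j : ℕ) : bead μ i ≠ gap μ j := by
  have hcol := lt_rowLen_iff_lt_colLen (μ := μ) (i := i) (j := j)
  unfold bead gap
  omega

theorem exists_gap_eq {x : ℤ} (hx : x ∉ Set.range (bead μ)) : ∃ j, gap μ j = x := by
  -- The column ending at `x` has length `i`, the number of rows ending before `x`.
  have hex : ∃ i, x < bead μ i :=
    ⟨μ.colLen 0 + (x.toNat + 1), by rw [bead_eq_self (by omega)]; omega⟩
  obtain ⟨i, hi, hmin⟩ : ∃ i, x < bead μ i ∧ ∀ k < i, bead μ k ≤ x :=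
    ⟨Nat.find hex, Nat.find_spec hex, fun k hk => not_lt.1 (Nat.find_min hex hk)⟩
  obtain ⟨j, hj⟩ : ∃ j : ℕ, (j : ℤ) = i - 1 - x :=
    ⟨(i - 1 - x).toNat, Int.toNat_of_nonneg (by unfold bead at hi; omega)⟩
  have hle : μ.colLen j ≤ i := by
    rw [← not_lt, ← lt_rowLen_iff_lt_colLen]
    unfold bead at hi
    omega
  have hge : i ≤ μ.colLen j := by
    rcases i with _ | k
    · exact Nat.zero_le _
    · have hlt : bead μ k < x := lt_of_le_of_ne (hmin k k.lt_succ_self) fun h => hx ⟨k, h⟩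
      rw [Nat.succ_le_iff, ← lt_rowLen_iff_lt_colLen]
      unfold bead at hlt
      omega
  refine ⟨j, ?_⟩
  unfold gap
  omega

theorem compl_range_bead (μ : YoungDiagram) : (Set.range (bead μ))ᶜ = Set.range (gap μ) := by
  ext x
  refine ⟨exists_gap_eq, ?_⟩
  rintro ⟨j, rfl⟩ ⟨i, hi⟩
  exact bead_ne_gap i j hi

theorem bddBelow_range_bead (μ : YoungDiagram) : BddBelow (Set.range (bead μ)) :=
  ⟨bead μ 0, Set.forall_mem_range.2 fun i => (strictMono_bead μ).monotone i.zero_le⟩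

theorem bddAbove_compl_range_bead (μ : YoungDiagram) : BddAbove (Set.range (bead μ))ᶜ := by
  rw [compl_range_bead]
  refine ⟨gap μ 0, Set.forall_mem_range.2 fun j => ?_⟩
  have := μ.colLen_anti 0 j j.zero_le
  unfold gap
  omega

theorem exists_rowLen_eq {r : ℕ → ℕ} (hr : Antitone r) {N : ℕ} (hN : r N = 0) :
    ∃ μ : YoungDiagram, μ.rowLen = r := by
  have hsorted : (List.ofFn fun i : Fin N => r i).SortedGE :=
    List.sortedGE_ofFn_iff.2 fun _ _ h => hr h
  refine ⟨YoungDiagram.ofRowLens _ hsorted, funext fun i => eq_of_forall_lt_iff fun j => ?_⟩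
  rw [← YoungDiagram.mem_iff_lt_rowLen, YoungDiagram.mem_ofRowLens]
  have hzero : N ≤ i → r i = 0 := fun hi => Nat.le_zero.1 (hN ▸ hr hi)
  simp only [List.length_ofFn, List.getElem_ofFn, exists_prop]
  omega

theorem exists_bead_eq {f : ℕ → ℤ} (hf : StrictMono f) (hfix : ∃ᶠ n : ℕ in atTop, f n = n) :
    ∃ μ, bead μ = f := by
  have hmono := monotone_sub_natCast_of_strictMono hf
  have hle (n : ℕ) : f n ≤ n := by
    obtain ⟨m, hnm, hm⟩ := frequently_atTop.1 hfix n
    have : f n - n ≤ f m - m := hmono hnm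
    omega
  obtain ⟨N, hN⟩ := hfix.exists
  have hanti : Antitone fun n : ℕ => (n - f n).toNat := fun a b hab => by
    have : f a - a ≤ f b - b := hmono hab
    dsimp only
    omega
  obtain ⟨μ, hμ⟩ := exists_rowLen_eq hanti (N := N) (by simp [hN])
  refine ⟨μ, funext fun n => ?_⟩
  have := hle n
  simp only [bead, hμ]
  omega

end Beads

section Cores

/-- A bead set `S ⊆ ℤ` is flush on the `l`-abacus if, on every runner (residue class mod `l`), all
positions after a bead carry beads. These will be the bead sets of `l`-cores. -/
def IsFlush (l : ℕ) (S : Set ℤ) : Prop :=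
  ∀ ⦃x y : ℤ⦄, x ∈ S → x ≤ y → (x : ZMod l) = y → y ∈ S

theorem hookLength_eq_gap_sub_bead {μ : YoungDiagram} {i j : ℕ} (h : (i, j) ∈ μ) :
    (hookLength μ (i, j) : ℤ) = gap μ j - bead μ i := by
  have hrow := YoungDiagram.mem_iff_lt_rowLen.1 h
  have hcol := YoungDiagram.mem_iff_lt_colLen.1 h
  simp only [hookLength, gap, bead]
  omega

theorem isCore_iff_isFlush {l : ℕ} {μ : YoungDiagram} :
    IsCore l μ ↔ IsFlush l (Set.range (bead μ)) := by
  constructor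
  · rintro hcore _ y ⟨i, rfl⟩ hle hmod
    by_contra hy
    obtain ⟨j, rfl⟩ := exists_gap_eq hy
    have hmem : (i, j) ∈ μ := mem_iff_bead_lt_gap.2 (hle.lt_of_ne (bead_ne_gap i j))
    apply hcore (i, j) ((YoungDiagram.mem_cells _).2 hmem)
    rwa [← Int.natCast_dvd_natCast, hookLength_eq_gap_sub_bead hmem,
      ← ZMod.intCast_eq_intCast_iff_dvd_sub]
  · rintro hflush ⟨i, j⟩ hc hdvd
    have hmem := (YoungDiagram.mem_cells _).1 hc
    rw [← Int.natCast_dvd_natCast, hookLength_eq_gap_sub_bead hmem,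
      ← ZMod.intCast_eq_intCast_iff_dvd_sub] at hdvd
    obtain ⟨k, hk⟩ := hflush ⟨i, rfl⟩ (mem_iff_bead_lt_gap.1 hmem).le hdvd
    exact bead_ne_gap k j hk

end Cores

section Abacus

variable {l : ℕ} [NeZero l] {v : ZMod l → ℤ}

theorem mul_ediv_add_val_intCast (x : ℤ) : (l : ℤ) * (x / l) + (x : ZMod l).val = x := by
  rw [ZMod.val_intCast, Int.mul_ediv_add_emod]

theorem mul_add_val_ediv (q : ℤ) (j : ZMod l) : ((l : ℤ) * q + j.val) / l = q := by
  have hl : (l : ℤ) ≠ 0 := by exact_mod_cast NeZero.ne l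
  rw [add_comm, Int.add_mul_ediv_left _ _ hl,
    Int.ediv_eq_zero_of_lt (by positivity) (by exact_mod_cast j.val_lt), zero_add]

/-- The flush bead set whose lowest bead on the runner `j` lies in row `v j`, the integer
`l * q + r` with `0 ≤ r < l` being placed in row `q` of the runner `r`. -/
def abacus (l : ℕ) (v : ZMod l → ℤ) : Set ℤ := {x | v x ≤ x / l}

theorem mul_add_val_mem_abacus {q : ℤ} {j : ZMod l} :
    (l : ℤ) * q + j.val ∈ abacus l v ↔ v j ≤ q := by
  change v (((l : ℤ) * q + j.val : ℤ) : ZMod l) ≤ ((l : ℤ) * q + j.val) / l ↔ v j ≤ q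
  rw [mul_add_val_ediv]
  simp

theorem abacus_zero : abacus l 0 = Set.range ((↑) : ℕ → ℤ) := by
  have hl : (0 : ℤ) < l := by exact_mod_cast NeZero.pos l
  ext x
  change 0 ≤ x / (l : ℤ) ↔ ∃ n : ℕ, (n : ℤ) = x
  rw [Int.ediv_nonneg_iff_of_pos hl]
  exact ⟨fun hx => ⟨x.toNat, Int.toNat_of_nonneg hx⟩, by rintro ⟨n, rfl⟩; positivity⟩

theorem isFlush_abacus : IsFlush l (abacus l v) := fun x y hx hxy hmod => by
  have hx : v x ≤ x / l := hx
  change v y ≤ y / l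
  rw [← hmod]
  exact hx.trans (Int.ediv_le_ediv (by exact_mod_cast NeZero.pos l) hxy)

theorem mem_abacus_of_mul_le {M : ℤ} (hM : ∀ j, v j ≤ M) {x : ℤ} (hx : l * M ≤ x) :
    x ∈ abacus l v :=
  (hM x).trans <| (Int.le_ediv_iff_mul_le (by exact_mod_cast NeZero.pos l)).2 (by linarith)

theorem bddBelow_abacus (v : ZMod l → ℤ) : BddBelow (abacus l v) := by
  obtain ⟨L, hL⟩ := (Set.finite_range v).bddBelow
  refine ⟨L * l, fun x hx => ?_⟩
  rw [← Int.le_ediv_iff_mul_le (by exact_mod_cast NeZero.pos l)]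
  exact (hL ⟨_, rfl⟩).trans hx

theorem IsFlush.exists_mul_add_val_mem_iff {S : Set ℤ} (hS : IsFlush l S) (hbelow : BddBelow S)
    (habove : BddAbove Sᶜ) (j : ZMod l) : ∃ w : ℤ, ∀ q : ℤ, (l : ℤ) * q + j.val ∈ S ↔ w ≤ q := by
  have hl : (0 : ℤ) < l := by exact_mod_cast NeZero.pos l
  obtain ⟨L, hL⟩ := hbelow
  obtain ⟨H, hH⟩ := habove
  have hbdd : ∃ b, ∀ q : ℤ, (l : ℤ) * q + j.val ∈ S → b ≤ q :=
    ⟨L / l, fun q hq => by simpa only [mul_add_val_ediv] using Int.ediv_le_ediv hl (hL hq)⟩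
  have hne : ∃ q : ℤ, (l : ℤ) * q + j.val ∈ S := by
    refine ⟨max H 0 + 1, not_not.1 fun hq => (hH hq).not_gt ?_⟩
    have : max H 0 + 1 ≤ l * (max H 0 + 1) := le_mul_of_one_le_left (by positivity) hl
    omega
  obtain ⟨w, hw, hmin⟩ := Int.exists_least_of_bdd hbdd hne
  refine ⟨w, fun q => ⟨hmin q, fun hq => hS hw ?_ (by simp)⟩⟩
  gcongr

theorem IsFlush.exists_eq_abacus {S : Set ℤ} (hS : IsFlush l S) (hbelow : BddBelow S)
    (habove : BddAbove Sᶜ) : ∃ v, S = abacus l v := by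
  choose v hv using hS.exists_mul_add_val_mem_iff hbelow habove
  refine ⟨v, Set.ext fun x => ?_⟩
  rw [← mul_ediv_add_val_intCast (l := l) x, hv, mul_add_val_mem_abacus]

theorem card_filter_intCast_eq_of_range_eq_abacus {f : ℕ → ℤ} (hf : StrictMono f)
    (hrange : Set.range f = abacus l v) {M : ℤ} {n : ℕ} (hn : f n = l * M)
    {j : ZMod l} (hj : v j ≤ M) : (#{i ∈ range n | (f i : ZMod l) = j} : ℤ) = M - v j := by
  have hl : (0 : ℤ) < l := by exact_mod_cast NeZero.pos l
  have hrow (i : ℕ) : v (f i) ≤ f i / l := show f i ∈ abacus l v from hrange ▸ ⟨i, rfl⟩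
  have hlt (i : ℕ) : i < n ↔ f i / l < M := by
    rw [← hf.lt_iff_lt, hn, mul_comm, Int.ediv_lt_iff_lt_mul hl]
  have hcard : #{i ∈ range n | (f i : ZMod l) = j} = #(Ico (v j) M) := by
    refine card_nbij (fun i => f i / l) ?_ ?_ ?_
    · intro i hi
      obtain ⟨hin, rfl⟩ := mem_filter.1 hi
      exact mem_Ico.2 ⟨hrow i, (hlt i).1 (mem_range.1 hin)⟩
    · intro i hi i' hi' hdiv
      have hmod := (mem_filter.1 hi).2.trans (mem_filter.1 hi').2.symm
      apply hf.injective
      rw [← mul_ediv_add_val_intCast (l := l) (f i), ← mul_ediv_add_val_intCast (l := l) (f i'),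
        hmod, show f i / l = f i' / l from hdiv]
    · intro q hq
      obtain ⟨hvq, hqM⟩ := mem_Ico.1 hq
      obtain ⟨i, hi⟩ : (l * q + j.val : ℤ) ∈ Set.range f := hrange ▸ mul_add_val_mem_abacus.2 hvq
      have hdiv : f i / l = q := by rw [hi, mul_add_val_ediv]
      exact ⟨i, mem_filter.2 ⟨mem_range.2 ((hlt i).2 (hdiv ▸ hqM)), by simp [hi]⟩, hdiv⟩
  rw [hcard, Int.card_Ico, Int.toNat_of_nonneg (sub_nonneg.2 hj)]

theorem natCast_eq_mul_sub_sum_of_range_eq_abacus {f : ℕ → ℤ} (hf : StrictMono f)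
    (hrange : Set.range f = abacus l v) {M : ℤ} {n : ℕ} (hn : f n = l * M) (hM : ∀ j, v j ≤ M) :
    (n : ℤ) = l * M - ∑ j, v j := by
  calc (n : ℤ) = ∑ j : ZMod l, (#{i ∈ range n | (f i : ZMod l) = j} : ℤ) := by
        rw [← Nat.cast_sum, ← card_eq_sum_card_fiberwise fun _ _ => mem_coe.2 (mem_univ _),
          card_range]
    _ = ∑ j : ZMod l, (M - v j) :=
        sum_congr rfl fun j _ => card_filter_intCast_eq_of_range_eq_abacus hf hrange hn (hM j)
    _ = l * M - ∑ j, v j := by simp [sum_sub_distrib, ZMod.card]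

theorem exists_range_bead_eq_abacus (hv : ∑ j, v j = 0) :
    ∃ μ, Set.range (bead μ) = abacus l v := by
  obtain ⟨K, hK⟩ := (Set.finite_range v).bddAbove
  have hle {M : ℕ} (hM : K ≤ M) : ∀ j, v j ≤ M := fun j => (hK ⟨j, rfl⟩).trans hM
  have hunbdd : ¬ BddAbove (abacus l v) := fun hbdd =>
    not_bddAbove_Ici _ (hbdd.mono fun x hx => mem_abacus_of_mul_le (fun j => hK ⟨j, rfl⟩) hx)
  obtain ⟨f, hf, hrange⟩ := exists_strictMono_range_eq (bddBelow_abacus v) hunbdd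
  have hfix : ∃ᶠ n : ℕ in atTop, f n = n := by
    refine frequently_atTop.2 fun m => ?_
    obtain ⟨M, hKM, hmM⟩ : ∃ M : ℕ, K ≤ M ∧ m ≤ M := ⟨max K.toNat m, by omega, by omega⟩
    obtain ⟨n, hn⟩ : (l * M : ℤ) ∈ Set.range f := hrange ▸ mem_abacus_of_mul_le (hle hKM) le_rfl
    have hnM := natCast_eq_mul_sub_sum_of_range_eq_abacus hf hrange hn (hle hKM)
    rw [hv, sub_zero] at hnM
    refine ⟨n, hmM.trans ?_, hn.trans hnM.symm⟩
    rw [show n = l * M by exact_mod_cast hnM]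
    exact Nat.le_mul_of_pos_left M (NeZero.pos l)
  obtain ⟨μ, rfl⟩ := exists_bead_eq hf hfix
  exact ⟨μ, hrange⟩

end Abacus

section ContentVector

variable {l : ℕ} {μ : YoungDiagram}

/-- The vector `(c̄_j - c̄_{j+1})_j` attached to `μ`. -/
def contentVector (l : ℕ) (μ : YoungDiagram) (j : ZMod l) : ℤ :=
  contentCountMod l μ j - contentCountMod l μ (j + 1)

theorem sum_contentVector [NeZero l] (μ : YoungDiagram) : ∑ j, contentVector l μ j = 0 := by
  simp only [contentVector, sum_sub_distrib, sub_eq_zero]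
  exact (Equiv.sum_comp (Equiv.addRight (1 : ZMod l)) fun j => (contentCountMod l μ j : ℤ)).symm

theorem contentCountMod_eq_sum {N : ℕ} (hN : μ.colLen 0 ≤ N) (j : ZMod l) :
    (contentCountMod l μ j : ℤ) = ∑ i ∈ range N, ∑ k ∈ range (μ.rowLen i),
      if ((i - k : ℤ) : ZMod l) = j then 1 else 0 := by
  rw [contentCountMod, card_filter, Nat.cast_sum,
    sum_finset_product μ.cells (range N) fun i => range (μ.rowLen i)]
  · push_cast
    rfl
  · rintro ⟨i, k⟩
    rw [YoungDiagram.mem_cells, mem_range, mem_range, ← YoungDiagram.mem_iff_lt_rowLen,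
      iff_and_self, YoungDiagram.mem_iff_lt_colLen]
    exact fun h => h.trans_le ((μ.colLen_anti 0 k k.zero_le).trans hN)

theorem contentVector_eq_card_sub_card {N : ℕ} (hN : μ.colLen 0 ≤ N) (j : ZMod l) :
    contentVector l μ j = #{i ∈ range N | (((i : ℕ) : ℤ) : ZMod l) = j} -
      #{i ∈ range N | (bead μ i : ZMod l) = j} := by
  let inClass (x : ℤ) : ℤ := if (x : ZMod l) = j then 1 else 0
  have hshift (x : ℤ) : (if (x : ZMod l) = j + 1 then 1 else 0) = inClass (x - 1) := by
    simp only [inClass, Int.cast_sub, Int.cast_one, sub_eq_iff_eq_add]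
  have htelescope (i : ℕ) :
      ∑ k ∈ range (μ.rowLen i), (inClass (i - k) - inClass (i - k - 1)) =
        inClass i - inClass (bead μ i) := by
    have := sum_range_sub' (fun k : ℕ => inClass (i - k)) (μ.rowLen i)
    simpa only [Nat.cast_add, Nat.cast_one, Nat.cast_zero, sub_zero, ← sub_sub, bead] using this
  simp only [contentVector, contentCountMod_eq_sum hN, hshift, card_filter, Nat.cast_sum,
    Nat.cast_ite, Nat.cast_one, Nat.cast_zero, ← sum_sub_distrib]
  exact sum_congr rfl fun i _ => htelescope i

theorem contentVector_eq_of_range_bead_eq_abacus [NeZero l] {v : ZMod l → ℤ}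
    (h : Set.range (bead μ) = abacus l v) : contentVector l μ = v := by
  funext j
  obtain ⟨M, hcol, hM⟩ : ∃ M : ℕ, μ.colLen 0 ≤ M ∧ v j ≤ M :=
    ⟨max (μ.colLen 0) (v j).toNat, by omega, by omega⟩
  have hN : μ.colLen 0 ≤ l * M := hcol.trans (Nat.le_mul_of_pos_left M (NeZero.pos l))
  have hnat := card_filter_intCast_eq_of_range_eq_abacus Nat.strictMono_cast abacus_zero.symm
    (Nat.cast_mul l M) (j := j) M.cast_nonneg
  have hbead := card_filter_intCast_eq_of_range_eq_abacus (strictMono_bead μ) h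
    ((bead_eq_self hN).trans (Nat.cast_mul l M)) hM
  rw [contentVector_eq_card_sub_card hN, hnat, hbead, Pi.zero_apply]
  ring

theorem IsCore.range_bead_eq_abacus [NeZero l] (hμ : IsCore l μ) :
    Set.range (bead μ) = abacus l (contentVector l μ) := by
  obtain ⟨v, hv⟩ := (isCore_iff_isFlush.1 hμ).exists_eq_abacus (bddBelow_range_bead μ)
    (bddAbove_compl_range_bead μ)
  rw [hv, contentVector_eq_of_range_bead_eq_abacus hv]

end ContentVector

/-- The map `λ ↦ (c̄_j(λ) − c̄_{j+1}(λ))_{j ∈ ℤ/lℤ}` is a bijection from the set of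
`l`-core partitions onto the type `A_{l−1}` root lattice, i.e. the set of vectors
`v : ℤ/lℤ → ℤ` with `∑ j, v j = 0`. -/
theorem core_bijection (l : ℕ) [NeZero l] :
    Set.BijOn
      (fun (μ : YoungDiagram) => fun (j : ZMod l) =>
        (contentCountMod l μ j : ℤ) - (contentCountMod l μ (j + 1) : ℤ))
      {μ : YoungDiagram | IsCore l μ}
      {v : ZMod l → ℤ | ∑ j : ZMod l, v j = 0} := by
  refine ⟨fun μ _ => sum_contentVector μ, fun μ hμ ν hν hvec => ?_, fun v hv => ?_⟩
  · have hvec : contentVector l μ = contentVector l ν := hvec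
    apply eq_of_range_bead_eq
    rw [IsCore.range_bead_eq_abacus hμ, IsCore.range_bead_eq_abacus hν, hvec]
  · obtain ⟨μ, hμ⟩ := exists_range_bead_eq_abacus hv
    exact ⟨μ, isCore_iff_isFlush.2 (hμ ▸ isFlush_abacus),
      contentVector_eq_of_range_bead_eq_abacus hμ⟩
end

section
/- Fix an integer l ≥ 1, a field F, and elements t_1, t_2 ∈ F with t_1^{ln} ≠ 1 and t_2^{ln} ≠ 1 for all integers n ≥ 1 (so that Γ_{t_1} and Γ_{t_2} are invertible). Let neg be the unique F-algebra endomorphism of R with neg(p_{i,n}) = p_{−i,n}. Then for every i ∈ ℤ/lℤ and n ≥ 1, (neg ∘ Γ_{t_2}^{−1} ∘ neg ∘ Γ_{t_1}^{−1} ∘ neg)(p_{i,n}) = ((1 − t_1^{ln})(1 − t_2^{ln}))^{−1} Σ_{j=0}^{l−1} Σ_{k=0}^{l−1} t_1^{nj} t_2^{nk} p_{−i−j+k, n}. (This is the generator-level identity underlying the wreath Cauchy kernel for the deformed Hall pairing.) -/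
open MvPolynomial

/-- The matrix plethysm `Γ_x`: the unique `F`-algebra endomorphism of the polynomial
algebra on the colored power sums `p_{i,n}` (indexed by `i ∈ ℤ/lℤ`, `n ≥ 1`) with
`Γ_x(p_{i,n}) = p_{i,n} − x^n p_{i−1,n}`. -/
noncomputable def Gamma (l : ℕ) (F : Type*) [Field F] (x : F) :
    MvPolynomial (ZMod l × ℕ+) F →ₐ[F] MvPolynomial (ZMod l × ℕ+) F :=
  aeval (fun p : ZMod l × ℕ+ =>
    X p - C (x ^ (p.2 : ℕ)) * X (p.1 - 1, p.2))

/-- The `F`-algebra endomorphism `neg` with `neg(p_{i,n}) = p_{−i,n}`. -/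
noncomputable def negMap (l : ℕ) (F : Type*) [Field F] :
    MvPolynomial (ZMod l × ℕ+) F →ₐ[F] MvPolynomial (ZMod l × ℕ+) F :=
  aeval (fun p : ZMod l × ℕ+ => X (-p.1, p.2))

/-!
The generators of a fixed degree `n` span a `Γ_x`-stable subspace on which `Γ_x` is `1 - x ^ n • s`,
where `s` is the cyclic shift `p_{i,n} ↦ p_{i-1,n}`. Geometric sums in `x ^ n • s` therefore
telescope, and since `s ^ l = 1` the sum of length `l` inverts `Γ_x` up to the factor
`1 - x ^ (l * n)`. Conjugating by `neg` turns `s` into `s⁻¹`, which accounts for the opposite signs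
of `j` and `k` in the double sum.
-/

section

variable {l : ℕ} {F : Type*} [Field F]

lemma Gamma_X (x : F) (i : ZMod l) (n : ℕ+) :
    Gamma l F x (X (i, n)) = X (i, n) - C (x ^ (n : ℕ)) * X (i - 1, n) :=
  aeval_X _ _

lemma negMap_X (i : ZMod l) (n : ℕ+) : negMap l F (X (i, n)) = X (-i, n) :=
  aeval_X _ _

lemma Gamma_sum_range (x : F) (i : ZMod l) (n : ℕ+) (m : ℕ) :
    Gamma l F x (∑ j ∈ Finset.range m, C (x ^ ((n : ℕ) * j)) * X (i - (j : ZMod l), n)) =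
      X (i, n) - C (x ^ ((n : ℕ) * m)) * X (i - (m : ZMod l), n) := by
  induction m with
  | zero => simp
  | succ m ih =>
    have shift : i - ((m + 1 : ℕ) : ZMod l) = i - (m : ZMod l) - 1 := by
      rw [Nat.cast_succ, sub_sub]
    rw [Finset.sum_range_succ, map_add, ih, map_mul, Gamma_X, algHom_C, algebraMap_eq, shift,
      Nat.mul_succ, pow_add, C_mul]
    ring

lemma Gamma_sum_range_period (x : F) (i : ZMod l) (n : ℕ+) :
    Gamma l F x (∑ j ∈ Finset.range l, C (x ^ ((n : ℕ) * j)) * X (i - (j : ZMod l), n)) =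
      C (1 - x ^ (l * (n : ℕ))) * X (i, n) := by
  rw [Gamma_sum_range, ZMod.natCast_self, sub_zero, mul_comm (n : ℕ) l, C_sub, C_1, sub_mul,
    one_mul]

lemma apply_X_of_comp_Gamma_eq_id {x : F}
    {G : MvPolynomial (ZMod l × ℕ+) F →ₐ[F] MvPolynomial (ZMod l × ℕ+) F}
    (hG : G.comp (Gamma l F x) = AlgHom.id F _) {n : ℕ+} (hx : x ^ (l * (n : ℕ)) ≠ 1)
    (i : ZMod l) :
    G (X (i, n)) = C ((1 - x ^ (l * (n : ℕ)))⁻¹) *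
      ∑ j ∈ Finset.range l, C (x ^ ((n : ℕ) * j)) * X (i - (j : ZMod l), n) := by
  set c : F := 1 - x ^ (l * (n : ℕ))
  set S : MvPolynomial (ZMod l × ℕ+) F :=
    ∑ j ∈ Finset.range l, C (x ^ ((n : ℕ) * j)) * X (i - (j : ZMod l), n)
  have hc : c ≠ 0 := sub_ne_zero.mpr hx.symm
  have hS : C c * G (X (i, n)) = S := calc
    C c * G (X (i, n)) = G (C c * X (i, n)) := by rw [map_mul, algHom_C, algebraMap_eq]
    _ = G (Gamma l F x S) := by rw [Gamma_sum_range_period]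
    _ = S := DFunLike.congr_fun hG S
  rw [← hS, ← mul_assoc, ← C_mul, inv_mul_cancel₀ hc, C_1, one_mul]

lemma negMap_conj_apply_X_of_comp_Gamma_eq_id {x : F}
    {G : MvPolynomial (ZMod l × ℕ+) F →ₐ[F] MvPolynomial (ZMod l × ℕ+) F}
    (hG : G.comp (Gamma l F x) = AlgHom.id F _) {n : ℕ+} (hx : x ^ (l * (n : ℕ)) ≠ 1)
    (i : ZMod l) :
    negMap l F (G (negMap l F (X (i, n)))) = C ((1 - x ^ (l * (n : ℕ)))⁻¹) *
      ∑ k ∈ Finset.range l, C (x ^ ((n : ℕ) * k)) * X (i + (k : ZMod l), n) := by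
  have neg_shift (k : ℕ) : -(-i - (k : ZMod l)) = i + (k : ZMod l) := by
    rw [neg_sub', neg_neg, sub_neg_eq_add]
  simp only [negMap_X, apply_X_of_comp_Gamma_eq_id hG hx, map_mul, map_sum, algHom_C,
    algebraMap_eq, neg_shift]

end

/-- The generator-level identity underlying the wreath Cauchy kernel:
`(neg ∘ Γ_{t₂}⁻¹ ∘ neg ∘ Γ_{t₁}⁻¹ ∘ neg)(p_{i,n})
  = ((1−t₁^{ln})(1−t₂^{ln}))⁻¹ ∑_{j,k=0}^{l−1} t₁^{nj} t₂^{nk} p_{−i−j+k,n}`,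
where `Γ_{t₁}⁻¹, Γ_{t₂}⁻¹` denote two-sided inverses of `Γ_{t₁}, Γ_{t₂}`
(which exist since `t₁^{ln} ≠ 1 ≠ t₂^{ln}` for all `n ≥ 1`). -/
theorem neg_gammaInv_identity (l : ℕ) (hl : 0 < l) (F : Type*) [Field F]
    (t1 t2 : F)
    (h1 : ∀ n : ℕ, 1 ≤ n → t1 ^ (l * n) ≠ 1)
    (h2 : ∀ n : ℕ, 1 ≤ n → t2 ^ (l * n) ≠ 1)
    (G1inv G2inv : MvPolynomial (ZMod l × ℕ+) F →ₐ[F] MvPolynomial (ZMod l × ℕ+) F)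
    (hG1 : (Gamma l F t1).comp G1inv = AlgHom.id F _ ∧
      G1inv.comp (Gamma l F t1) = AlgHom.id F _)
    (hG2 : (Gamma l F t2).comp G2inv = AlgHom.id F _ ∧
      G2inv.comp (Gamma l F t2) = AlgHom.id F _)
    (i : ZMod l) (n : ℕ+) :
    negMap l F (G2inv (negMap l F (G1inv (negMap l F (X (i, n)))))) =
      C (((1 - t1 ^ (l * (n : ℕ))) * (1 - t2 ^ (l * (n : ℕ))))⁻¹) *
        ∑ j ∈ Finset.range l, ∑ k ∈ Finset.range l,
          C (t1 ^ ((n : ℕ) * j) * t2 ^ ((n : ℕ) * k)) *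
            X (-i - (j : ZMod l) + (k : ZMod l), n) := by
  have hx1 : t1 ^ (l * (n : ℕ)) ≠ 1 := h1 n n.pos
  have hx2 : t2 ^ (l * (n : ℕ)) ≠ 1 := h2 n n.pos
  rw [negMap_X, apply_X_of_comp_Gamma_eq_id hG1.2 hx1]
  simp only [map_mul, map_sum, algHom_C, algebraMap_eq,
    negMap_conj_apply_X_of_comp_Gamma_eq_id hG2.2 hx2, mul_inv, Finset.mul_sum]
  refine Finset.sum_congr rfl fun j _ => Finset.sum_congr rfl fun k _ => ?_
  ring
end

section
/- Fix an integer l ≥ 1. For a Maya diagram m and 0 ≤ i ≤ l − 1, define m^{(i)} : ℤ → {1, −1} by m^{(i)}(k) = m(i + kl). Then each m^{(i)} is a Maya diagram, the map m ↦ (m^{(0)}, …, m^{(l−1)}) is a bijection from the set of Maya diagrams onto the set of l-tuples of Maya diagrams, and charge(m) = Σ_{i=0}^{l−1} charge(m^{(i)}). In particular this map restricts to a bijection between Maya diagrams of charge zero and l-tuples of Maya diagrams whose charges sum to zero. -/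
/-- A Maya diagram: a function `m : ℤ → {1, −1}` (encoded as `ℤ → ℤ` taking only the
values `1` and `−1`) which is eventually `1` to the left and eventually `−1` to the
right. -/
def IsMaya (m : ℤ → ℤ) : Prop :=
  (∀ k : ℤ, m k = 1 ∨ m k = -1) ∧
    (∃ N : ℤ, ∀ k : ℤ, k < N → m k = 1) ∧
    (∃ N : ℤ, ∀ k : ℤ, N < k → m k = -1)

/-- The charge of a Maya diagram:
`#{k < 0 : m k = −1} − #{k ≥ 0 : m k = 1}`. -/
noncomputable def charge (m : ℤ → ℤ) : ℤ :=
  ({k : ℤ | k < 0 ∧ m k = -1}.ncard : ℤ) - ({k : ℤ | 0 ≤ k ∧ m k = 1}.ncard : ℤ)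

/-- The `i`-th component of the `l`-fold splitting of `m`:
`m^{(i)}(k) = m(i + kl)`. -/
def mayaSplit (l : ℕ) (m : ℤ → ℤ) (i : Fin l) : ℤ → ℤ :=
  fun k => m ((i : ℤ) + k * l)

/-!
Euclidean division `n = i + k * l` identifies `ℤ` with `Fin l × ℤ`, so splitting is currying along
this identification and is a bijection on all integer sequences. It respects the order of `ℤ` well
enough for everything else: `n → ±∞` exactly when `k → ±∞`, which transports the two tail
conditions, and `n < 0` exactly when `k < 0`, which transports the two counts in the charge.
-/

open Filter

section Residue

variable (l : ℕ) [NeZero l]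

/-- Euclidean division by `l` as an equivalence, sending a residue `i` and a quotient `k` to
`i + k * l`; it is `Int.divModEquiv` read backwards, with the residue first because it indexes the
components of the splitting. -/
def residueEquiv : Fin l × ℤ ≃ ℤ :=
  (Equiv.prodComm (Fin l) ℤ).trans (Int.divModEquiv l).symm

variable {l}

theorem residueEquiv_apply (i : Fin l) (k : ℤ) : residueEquiv l (i, k) = i + k * l :=
  add_comm _ _

theorem residue_add_mul_ediv (i : Fin l) (k : ℤ) : ((i : ℤ) + k * l) / l = k := by
  rw [Int.add_mul_ediv_right _ _ (Nat.cast_ne_zero.2 (NeZero.ne l)),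
    Int.ediv_eq_zero_of_lt (Int.natCast_nonneg i) (Int.ofNat_lt.2 i.isLt), zero_add]

theorem residue_add_mul_nonneg_iff (i : Fin l) (k : ℤ) : 0 ≤ (i : ℤ) + k * l ↔ 0 ≤ k := by
  rw [← Int.ediv_nonneg_iff_of_pos (Nat.cast_pos.2 (NeZero.pos l)), residue_add_mul_ediv]

theorem residue_add_mul_neg_iff (i : Fin l) (k : ℤ) : (i : ℤ) + k * l < 0 ↔ k < 0 := by
  simpa only [not_le] using (residue_add_mul_nonneg_iff i k).not

theorem eventually_iff_forall_residue {f : Filter ℤ}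
    (hmul : ∀ i : Fin l, Tendsto (fun k : ℤ => i + k * l) f f)
    (hdiv : Tendsto (fun n : ℤ => n / l) f f) {p : ℤ → Prop} :
    (∀ᶠ n in f, p n) ↔ ∀ i : Fin l, ∀ᶠ k in f, p (i + k * l) := by
  refine ⟨fun h i => (hmul i).eventually h, fun h => ?_⟩
  filter_upwards [hdiv.eventually (eventually_all.2 h)] with n hn
  obtain ⟨⟨i, k⟩, rfl⟩ := (residueEquiv l).surjective n
  simpa only [residueEquiv_apply, residue_add_mul_ediv] using hn i

theorem eventually_atTop_iff_forall_residue {p : ℤ → Prop} :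
    (∀ᶠ n in atTop, p n) ↔ ∀ i : Fin l, ∀ᶠ k in atTop, p (i + k * l) := by
  have hl : (0 : ℤ) < l := Nat.cast_pos.2 (NeZero.pos l)
  exact eventually_iff_forall_residue
    (fun i => tendsto_atTop_add_const_left _ _ (tendsto_id.atTop_mul_const' hl))
    (Monotone.tendsto_atTop_atTop (fun _ _ => Int.ediv_le_ediv hl)
      fun b => ⟨b * l, (Int.mul_ediv_cancel b hl.ne').ge⟩)

theorem eventually_atBot_iff_forall_residue {p : ℤ → Prop} :
    (∀ᶠ n in atBot, p n) ↔ ∀ i : Fin l, ∀ᶠ k in atBot, p (i + k * l) := by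
  have hl : (0 : ℤ) < l := Nat.cast_pos.2 (NeZero.pos l)
  exact eventually_iff_forall_residue
    (fun i => tendsto_atBot_add_const_left _ _ (tendsto_id.atBot_mul_const' hl))
    (Monotone.tendsto_atBot_atBot (fun _ _ => Int.ediv_le_ediv hl)
      fun b => ⟨b * l, (Int.mul_ediv_cancel b hl.ne').le⟩)

end Residue

theorem ncard_eq_sum_ncard_of_prod_equiv {ι α β : Type*} [Fintype ι] (e : ι × α ≃ β)
    {S : Set β} (hS : S.Finite) : S.ncard = ∑ i, {a | e (i, a) ∈ S}.ncard := by
  have hfiber (i : ι) : Finite {a // e (i, a) ∈ S} :=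
    hS.preimage (e.injective.comp (Prod.mk_right_injective i)).injOn
  calc S.ncard = Nat.card {x : ι × α // e (x.1, x.2) ∈ S} :=
        (Nat.card_congr (e.subtypeEquivOfSubtype (p := (· ∈ S)))).symm
    _ = Nat.card (Σ i, {a // e (i, a) ∈ S}) :=
        Nat.card_congr (Equiv.subtypeProdEquivSigmaSubtype fun i a => e (i, a) ∈ S)
    _ = ∑ i, {a | e (i, a) ∈ S}.ncard := Nat.card_sigma

theorem isMaya_iff_eventually {m : ℤ → ℤ} :
    IsMaya m ↔ (∀ k, m k = 1 ∨ m k = -1) ∧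
      (∀ᶠ k in atBot, m k = 1) ∧ ∀ᶠ k in atTop, m k = -1 := by
  simp only [IsMaya, atBot_basis_Iio.eventually_iff, atTop_basis_Ioi.eventually_iff, true_and,
    Set.mem_Iio, Set.mem_Ioi]

theorem IsMaya.finite_neg_and_eq_neg_one {m : ℤ → ℤ} (hm : IsMaya m) :
    {k : ℤ | k < 0 ∧ m k = -1}.Finite := by
  obtain ⟨-, ⟨A, hA⟩, -⟩ := hm
  refine (Set.finite_Ico A 0).subset fun k ⟨hk, hmk⟩ => ⟨?_, hk⟩
  by_contra! hkA
  have := hA k hkA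
  omega

theorem IsMaya.finite_nonneg_and_eq_one {m : ℤ → ℤ} (hm : IsMaya m) :
    {k : ℤ | 0 ≤ k ∧ m k = 1}.Finite := by
  obtain ⟨-, -, B, hB⟩ := hm
  refine (Set.finite_Icc 0 B).subset fun k ⟨hk, hmk⟩ => ⟨hk, ?_⟩
  by_contra! hBk
  have := hB k hBk
  omega

section Split

variable (l : ℕ) [NeZero l]

/-- The splitting of arbitrary integer sequences into `l` components, as an equivalence: it
reindexes along `residueEquiv` and curries. -/
def mayaSplitEquiv : (ℤ → ℤ) ≃ (Fin l → ℤ → ℤ) :=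
  ((residueEquiv l).symm.arrowCongr (Equiv.refl ℤ)).trans (Equiv.curry (Fin l) ℤ ℤ)

theorem coe_mayaSplitEquiv : ⇑(mayaSplitEquiv l) = mayaSplit l := by
  funext m i k
  exact congrArg m (residueEquiv_apply i k)

theorem forall_isMaya_mayaSplit_iff {m : ℤ → ℤ} : (∀ i, IsMaya (mayaSplit l m i)) ↔ IsMaya m := by
  have hvalues : (∀ n, m n = 1 ∨ m n = -1) ↔
      ∀ (i : Fin l) (k : ℤ), m (i + k * l) = 1 ∨ m (i + k * l) = -1 := by
    rw [← (residueEquiv l).forall_congr_right, Prod.forall]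
    simp only [residueEquiv_apply]
  rw [isMaya_iff_eventually, hvalues, eventually_atBot_iff_forall_residue (l := l),
    eventually_atTop_iff_forall_residue (l := l)]
  simp only [isMaya_iff_eventually, mayaSplit, forall_and]

theorem charge_eq_sum_charge_mayaSplit {m : ℤ → ℤ} (hm : IsMaya m) :
    charge m = ∑ i, charge (mayaSplit l m i) := by
  have hneg : {n : ℤ | n < 0 ∧ m n = -1}.ncard =
      ∑ i : Fin l, {k : ℤ | k < 0 ∧ mayaSplit l m i k = -1}.ncard := by
    simp only [ncard_eq_sum_ncard_of_prod_equiv (residueEquiv l) hm.finite_neg_and_eq_neg_one,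
      Set.mem_ofPred_eq, residueEquiv_apply, residue_add_mul_neg_iff, mayaSplit]
  have hnonneg : {n : ℤ | 0 ≤ n ∧ m n = 1}.ncard =
      ∑ i : Fin l, {k : ℤ | 0 ≤ k ∧ mayaSplit l m i k = 1}.ncard := by
    simp only [ncard_eq_sum_ncard_of_prod_equiv (residueEquiv l) hm.finite_nonneg_and_eq_one,
      Set.mem_ofPred_eq, residueEquiv_apply, residue_add_mul_nonneg_iff, mayaSplit]
  simp only [charge, hneg, hnonneg, Nat.cast_sum, Finset.sum_sub_distrib]

theorem bijOn_mayaSplit_isMaya :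
    Set.BijOn (mayaSplit l) {m | IsMaya m} {t | ∀ i, IsMaya (t i)} := by
  rw [← coe_mayaSplitEquiv]
  refine (mayaSplitEquiv l).bijOn fun m => ?_
  rw [coe_mayaSplitEquiv]
  exact forall_isMaya_mayaSplit_iff l

theorem bijOn_mayaSplit_charge_eq (c : ℤ) :
    Set.BijOn (mayaSplit l) {m | IsMaya m ∧ charge m = c}
      {t | (∀ i, IsMaya (t i)) ∧ ∑ i, charge (t i) = c} := by
  rw [← coe_mayaSplitEquiv]
  refine (mayaSplitEquiv l).bijOn fun m => ?_
  rw [coe_mayaSplitEquiv]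
  simp only [Set.mem_ofPred_eq, forall_isMaya_mayaSplit_iff]
  exact and_congr_right fun hm => by rw [charge_eq_sum_charge_mayaSplit l hm]

end Split

/-- For `l ≥ 1`: each component `m^{(i)}` of a Maya diagram is a Maya diagram, the
splitting `m ↦ (m^{(0)}, …, m^{(l−1)})` is a bijection from Maya diagrams onto
`l`-tuples of Maya diagrams, the charge of `m` is the sum of the charges of its
components, and in particular the splitting restricts to a bijection between
charge-zero Maya diagrams and `l`-tuples of Maya diagrams whose charges sum to
zero. -/
theorem mayaSplit_bijection (l : ℕ) (hl : 0 < l) :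
    (∀ m : ℤ → ℤ, IsMaya m → ∀ i : Fin l, IsMaya (mayaSplit l m i)) ∧
      Set.BijOn (mayaSplit l) {m : ℤ → ℤ | IsMaya m}
        {t : Fin l → ℤ → ℤ | ∀ i, IsMaya (t i)} ∧
      (∀ m : ℤ → ℤ, IsMaya m → charge m = ∑ i : Fin l, charge (mayaSplit l m i)) ∧
      Set.BijOn (mayaSplit l) {m : ℤ → ℤ | IsMaya m ∧ charge m = 0}
        {t : Fin l → ℤ → ℤ | (∀ i, IsMaya (t i)) ∧ ∑ i : Fin l, charge (t i) = 0} := by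
  have : NeZero l := ⟨hl.ne'⟩
  exact ⟨fun _ hm => (forall_isMaya_mayaSplit_iff l).2 hm, bijOn_mayaSplit_isMaya l,
    fun _ hm => charge_eq_sum_charge_mayaSplit l hm, bijOn_mayaSplit_charge_eq l 0⟩
end
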